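/- arXiv:2108.09962 — 2 statements merged into one kernel-verified Lean document; each statement's English description precedes it below -/
import Mathlib

section
/- Let t and d be positive integers and let F be a finite family of at least d+1 sets from F_{t,d}. If every d+1 members of F have a common point, then all members of F have a common point. In other words, the family F_{t,d} has Helly number at most d+1. -/
/-- `S ∈ 𝓕_{t,d}`: `S ⊆ (ℝ^d)^t` is a Cartesian product `A_1 × ⋯ × A_t`
of convex sets `A_i ⊆ ℝ^d`. -/
def IsProdOfConvex (t d : ℕ) (S : Set (Fin t → Fin d → ℝ)) : Prop :=
  ∃ A : Fin t → Set (Fin d → ℝ), (∀ j, Convex ℝ (A j)) ∧ S = {x | ∀ j, x j ∈ A j}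

/-!
A product of sets is nonempty exactly when each factor is, and the intersection of products is the
product of the intersections of the factors. Hence a bound on the Helly number that holds in each
factor holds for products, however many factors there are; in each factor the bound is Helly's
theorem.
-/

/-- The class `𝒞` of sets has Helly number at most `k`: a finite subfamily of `𝒞` has a common
point as soon as all its subfamilies of *at most* `k` members do. This form, unlike the one with
exactly `k` members, needs no lower bound on the size of the family. -/
def HasHellyNumberLE {X : Type*} (𝒞 : Set (Set X)) (k : ℕ) : Prop :=
  ∀ F : Finset (Set X), (∀ S ∈ F, S ∈ 𝒞) →
    (∀ H ⊆ F, H.card ≤ k → (⋂₀ (H : Set (Set X))).Nonempty) → (⋂₀ (F : Set (Set X))).Nonempty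

/-- The class of Cartesian products whose `j`-th factor belongs to `𝒞 j`, generalizing
`𝓕_{t,d}`. -/
def piFamily {κ : Type*} {E : κ → Type*} (𝒞 : ∀ j, Set (Set (E j))) : Set (Set (∀ j, E j)) :=
  {S | ∃ A : ∀ j, Set (E j), (∀ j, A j ∈ 𝒞 j) ∧ S = Set.univ.pi A}

theorem isProdOfConvex_iff_mem_piFamily {t d : ℕ} {S : Set (Fin t → Fin d → ℝ)} :
    IsProdOfConvex t d S ↔ S ∈ piFamily fun _ : Fin t ↦ {A : Set (Fin d → ℝ) | Convex ℝ A} := by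
  simp [IsProdOfConvex, piFamily, Set.pi]

theorem sInter_eq_univ_pi {κ : Type*} {E : κ → Type*} {F : Set (Set (∀ j, E j))}
    {A : Set (∀ j, E j) → ∀ j, Set (E j)} (hA : ∀ S ∈ F, S = Set.univ.pi (A S)) :
    ⋂₀ F = Set.univ.pi fun j ↦ ⋂ S ∈ F, A S j := by
  rw [Set.sInter_eq_biInter, Set.iInter₂_congr hA]
  ext x
  simp only [Set.mem_iInter, Set.mem_univ_pi]
  exact ⟨fun h j S hS ↦ h S hS j, fun h S hS j ↦ h j S hS⟩

namespace HasHellyNumberLE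

variable {X : Type*} {𝒞 : Set (Set X)} {k : ℕ}

theorem sInter_nonempty_of_card_eq (h𝒞 : HasHellyNumberLE 𝒞 k) {F : Finset (Set X)}
    (hcard : k ≤ F.card) (hF : ∀ S ∈ F, S ∈ 𝒞)
    (hint : ∀ H ⊆ F, H.card = k → (⋂₀ (H : Set (Set X))).Nonempty) :
    (⋂₀ (F : Set (Set X))).Nonempty := by
  refine h𝒞 F hF fun H hHF hHk ↦ ?_
  obtain ⟨K, hHK, hKF, hK⟩ := Finset.exists_subsuperset_card_eq hHF hHk hcard
  exact (hint K hKF hK).mono (Set.sInter_subset_sInter (Finset.coe_subset.2 hHK))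

theorem biInter_nonempty (h𝒞 : HasHellyNumberLE 𝒞 k) {ι : Type*} {s : Finset ι} {C : ι → Set X}
    (hC : ∀ i ∈ s, C i ∈ 𝒞) (hint : ∀ I ⊆ s, I.card ≤ k → (⋂ i ∈ I, C i).Nonempty) :
    (⋂ i ∈ s, C i).Nonempty := by
  classical
  suffices (⋂₀ (s.image C : Set (Set X))).Nonempty by simpa
  refine h𝒞 _ (by simpa using hC) fun H hH hHk ↦ ?_
  -- `C` may repeat sets, so keep just one index for each member of `H`.
  have hsurj : Set.SurjOn C s H := fun S hS ↦ by simpa using hH hS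
  obtain ⟨I, hIs, hinj, hIH⟩ := hsurj.exists_subset_injOn_image_eq
  lift I to Finset ι using s.finite_toSet.subset hIs
  obtain rfl : I.image C = H := by exact_mod_cast hIH
  rw [Finset.card_image_of_injOn hinj] at hHk
  simpa using hint I (Finset.coe_subset.1 hIs) hHk

theorem pi {κ : Type*} {E : κ → Type*} {𝒞 : ∀ j, Set (Set (E j))}
    (h𝒞 : ∀ j, HasHellyNumberLE (𝒞 j) k) : HasHellyNumberLE (piFamily 𝒞) k := by
  intro F hF hint
  choose! A hA𝒞 hFA using hF
  have sInter_eq (H) (hHF : H ⊆ F) :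
      ⋂₀ (H : Set (Set (∀ j, E j))) = Set.univ.pi fun j ↦ ⋂ S ∈ H, A S j :=
    sInter_eq_univ_pi fun S hS ↦ hFA S (hHF hS)
  rw [sInter_eq F subset_rfl, Set.univ_pi_nonempty_iff]
  refine fun j ↦ (h𝒞 j).biInter_nonempty (fun S hS ↦ hA𝒞 S hS j) fun I hIF hIk ↦ ?_
  have hI := hint I hIF hIk
  rw [sInter_eq I hIF, Set.univ_pi_nonempty_iff] at hI
  exact hI j

end HasHellyNumberLE

section Convex

variable {𝕜 : Type*} [Field 𝕜] [LinearOrder 𝕜] [IsStrictOrderedRing 𝕜] {d : ℕ}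

theorem hasHellyNumberLE_convex {E : Type*} [AddCommGroup E] [Module 𝕜 E] [FiniteDimensional 𝕜 E]
    (hd : Module.finrank 𝕜 E ≤ d) : HasHellyNumberLE {S : Set E | Convex 𝕜 S} (d + 1) :=
  fun _ hF hint ↦ Convex.helly_theorem_set' hF fun H hHF hH ↦ hint H hHF <| by lia

theorem stmt15_general {κ : Type*} {E : κ → Type*} [∀ j, AddCommGroup (E j)]
    [∀ j, Module 𝕜 (E j)] [∀ j, FiniteDimensional 𝕜 (E j)]
    (hd : ∀ j, Module.finrank 𝕜 (E j) ≤ d) (F : Finset (Set (∀ j, E j))) (hcard : d + 1 ≤ F.card)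
    (hF : ∀ S ∈ F, S ∈ piFamily fun j ↦ {A : Set (E j) | Convex 𝕜 A})
    (hint : ∀ H ⊆ F, H.card = d + 1 → (⋂₀ (H : Set (Set (∀ j, E j)))).Nonempty) :
    (⋂₀ (F : Set (Set (∀ j, E j)))).Nonempty :=
  (HasHellyNumberLE.pi fun j ↦ hasHellyNumberLE_convex (hd j)).sInter_nonempty_of_card_eq
    hcard hF hint

end Convex

/-- The family `𝓕_{t,d}` has Helly number at most `d + 1`. -/
theorem stmt15 (t d : ℕ) (ht : 0 < t) (hd : 0 < d)
    (F : Finset (Set (Fin t → Fin d → ℝ)))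
    (hcard : d + 1 ≤ F.card)
    (hF : ∀ A ∈ F, IsProdOfConvex t d A)
    (hint : ∀ H ⊆ F, H.card = d + 1 → (⋂₀ (H : Set (Set (Fin t → Fin d → ℝ)))).Nonempty) :
    (⋂₀ (F : Set (Set (Fin t → Fin d → ℝ)))).Nonempty :=
  stmt15_general (𝕜 := ℝ) (fun _ ↦ (Module.finrank_fin_fun ℝ).le) F hcard
    (fun A hA ↦ isProdOfConvex_iff_mem_piFamily.1 (hF A hA)) hint
end

section
/- For every positive integer m there exists a family F of m^2 nonempty sets such that: (1) every subfamily of F whose members pairwise intersect is intersecting (in particular F has Helly number at most 2); (2) exactly C(m^2, 2) - m * C(m, 2) pairs of members of F are intersecting; and (3) every intersecting subfamily of F has size at most m. -/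
/-!
Regard the points of an `m × m` grid as the index set and attach to each point the set of functions
whose graph passes through it. A set of points lies on the graph of a function exactly when no two
of them share a column; this condition only involves pairs, whence the Helly property. The
disjoint pairs are thus the pairs inside one of the `m` columns of `m` points, and an intersecting
subfamily picks at most one point per column.
-/

section

open Finset

variable {ι κ α β : Type*}

/-- The members of the extremal family: the set of functions `α → β` whose graph passes through the
point `x` of the grid `α × β`, whose columns are the fibres of `Prod.fst`. -/
def functionsThrough (x : α × β) : Set (α → β) := {f | f x.1 = x.2}

theorem mem_functionsThrough {x : α × β} {f : α → β} : f ∈ functionsThrough x ↔ f x.1 = x.2 :=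
  Iff.rfl

theorem functionsThrough_nonempty (x : α × β) : (functionsThrough x).Nonempty :=
  ⟨fun _ => x.2, rfl⟩

theorem eq_of_nonempty_functionsThrough_inter {x y : α × β}
    (h : (functionsThrough x ∩ functionsThrough y).Nonempty) (hxy : x.1 = y.1) : x = y := by
  obtain ⟨f, hx, hy⟩ := h
  rw [mem_functionsThrough] at hx hy
  exact Prod.ext hxy (by rw [← hx, ← hy, hxy])

theorem nonempty_biInter_functionsThrough [Nonempty β] {x : ι → α × β} {S : Set ι}
    (h : ∀ i ∈ S, ∀ j ∈ S, (x i).1 = (x j).1 → x i = x j) :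
    (⋂ i ∈ S, functionsThrough (x i)).Nonempty := by
  have hfactor : (fun i : S => (x i).2).FactorsThrough (fun i : S => (x i).1) :=
    fun i j hij => congrArg Prod.snd (h i i.2 j j.2 hij)
  obtain ⟨f, hf⟩ := (Function.factorsThrough_iff _).mp hfactor
  exact ⟨f, Set.mem_iInter₂.mpr fun i hi => (congrFun hf ⟨i, hi⟩).symm⟩

theorem nonempty_biInter_functionsThrough_of_pairwise [Nonempty β] {x : ι → α × β} {S : Set ι}
    (h : S.Pairwise fun i j => (functionsThrough (x i) ∩ functionsThrough (x j)).Nonempty) :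
    (⋂ i ∈ S, functionsThrough (x i)).Nonempty := by
  refine nonempty_biInter_functionsThrough fun i hi j hj hij => ?_
  obtain rfl | hne := eq_or_ne i j
  · rfl
  · exact eq_of_nonempty_functionsThrough_inter (h hi hj hne) hij

theorem injOn_of_nonempty_biInter_functionsThrough {x : ι → α × β} {S : Set ι}
    (hx : S.InjOn x) (hS : (⋂ i ∈ S, functionsThrough (x i)).Nonempty) :
    S.InjOn fun i => (x i).1 := by
  obtain ⟨f, hf⟩ := hS
  rw [Set.mem_iInter₂] at hf
  exact fun i hi j hj hij =>
    hx hi hj (eq_of_nonempty_functionsThrough_inter ⟨f, hf i hi, hf j hj⟩ hij)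

theorem nonempty_biInter_functionsThrough_iff_injOn [Nonempty β] {x : ι → α × β} {S : Set ι}
    (hx : S.InjOn x) :
    (⋂ i ∈ S, functionsThrough (x i)).Nonempty ↔ S.InjOn fun i => (x i).1 :=
  ⟨injOn_of_nonempty_biInter_functionsThrough hx, fun h =>
    nonempty_biInter_functionsThrough fun _ hi _ hj hij => congrArg x (h hi hj hij)⟩

theorem card_le_of_nonempty_biInter_functionsThrough [Fintype α] {x : ι → α × β} {S : Finset ι}
    (hx : Set.InjOn x S) (hS : (⋂ i ∈ S, functionsThrough (x i)).Nonempty) :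
    #S ≤ Fintype.card α :=
  card_le_card_of_injOn _ (fun _ _ => mem_univ _)
    (injOn_of_nonempty_biInter_functionsThrough hx hS)

open scoped Classical in
theorem filter_not_injOn_powersetCard_two {s : Finset ι} {t : Finset κ} {p : ι → κ}
    (hp : Set.MapsTo p s t) :
    ((s.powersetCard 2).filter fun u : Finset ι => ¬ Set.InjOn p u) =
      t.biUnion fun b => {i ∈ s | p i = b}.powersetCard 2 := by
  ext u
  simp only [mem_filter, mem_biUnion, mem_powersetCard]
  constructor
  · rintro ⟨⟨hus, hu⟩, hinj⟩
    obtain ⟨i, j, -, rfl⟩ := card_eq_two.mp hu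
    have hij : p i = p j := by
      rw [coe_pair, Set.injOn_pair] at hinj
      exact (Classical.not_imp.mp hinj).1
    exact ⟨p i, hp (hus (by simp)), by grind, hu⟩
  · rintro ⟨b, -, hub, hu⟩
    refine ⟨⟨hub.trans (filter_subset _ _), hu⟩, fun hinj => ?_⟩
    obtain ⟨i, hi, j, hj, hij⟩ := one_lt_card.mp (hu.symm ▸ one_lt_two)
    exact hij (hinj hi hj ((mem_filter.mp (hub hi)).2.trans (mem_filter.mp (hub hj)).2.symm))

open scoped Classical in
theorem pairwiseDisjoint_powersetCard_fiber (s : Finset ι) (t : Set κ) (p : ι → κ) {k : ℕ}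
    (hk : k ≠ 0) :
    t.PairwiseDisjoint fun b => {i ∈ s | p i = b}.powersetCard k := by
  refine fun b _ c _ hbc => disjoint_left.mpr fun u hb hc => hbc ?_
  rw [mem_powersetCard] at hb hc
  obtain ⟨i, hi⟩ : u.Nonempty := card_ne_zero.mp (hb.2.trans_ne hk)
  exact (mem_filter.mp (hb.1 hi)).2.symm.trans (mem_filter.mp (hc.1 hi)).2

open scoped Classical in
theorem card_filter_not_injOn_powersetCard_two {s : Finset ι} {t : Finset κ} {p : ι → κ}
    (hp : Set.MapsTo p s t) :
    #((s.powersetCard 2).filter fun u : Finset ι => ¬ Set.InjOn p u) =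
      ∑ b ∈ t, (#{i ∈ s | p i = b}).choose 2 := by
  rw [filter_not_injOn_powersetCard_two hp,
    card_biUnion (pairwiseDisjoint_powersetCard_fiber s t p two_ne_zero)]
  simp only [card_powersetCard]

open scoped Classical in
theorem card_filter_fst_eq [Fintype ι] [Fintype β] (e : ι ≃ α × β) (a : α) :
    #{i | (e i).1 = a} = Fintype.card β := by
  rw [← card_univ, ← card_map (.sectR a β), ← card_map e.toEmbedding]
  congr 1
  ext ⟨a', b⟩
  simp [eq_comm]

open scoped Classical in
theorem card_filter_nonempty_biInter_functionsThrough [Fintype ι] [Fintype α] [Fintype β]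
    [Nonempty β] (e : ι ≃ α × β) :
    #((univ.powersetCard 2).filter
        fun S : Finset ι => (⋂ i ∈ S, functionsThrough (e i)).Nonempty) =
      (Fintype.card ι).choose 2 - Fintype.card α * (Fintype.card β).choose 2 := by
  have hinjOn (S : Finset ι) : (⋂ i ∈ S, functionsThrough (e i)).Nonempty ↔
      Set.InjOn (fun i => (e i).1) S :=
    nonempty_biInter_functionsThrough_iff_injOn e.injective.injOn
  have hnot :
      #((univ.powersetCard 2).filter fun S : Finset ι => ¬ Set.InjOn (fun i => (e i).1) S) =
        Fintype.card α * (Fintype.card β).choose 2 := by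
    rw [card_filter_not_injOn_powersetCard_two (t := univ) fun _ _ => mem_coe.mpr (mem_univ _)]
    simp only [card_filter_fst_eq, sum_const, card_univ, smul_eq_mul]
  simp only [hinjOn]
  rw [← hnot, ← card_univ, ← card_powersetCard]
  exact Nat.eq_sub_of_add_eq (card_filter_add_card_filter_not _)

end

open scoped Classical in
/-- A family of `m²` nonempty sets with Helly number at most 2 (every pairwise
intersecting subfamily is intersecting) whose intersection graph is the complete
`m`-partite graph `K_{m,…,m}`: it has exactly `C(m²,2) - m·C(m,2)` intersecting
pairs, yet every intersecting subfamily has size at most `m`. -/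
theorem stmt17 (m : ℕ) (hm : 0 < m) :
    ∃ (X : Type) (F : Fin (m ^ 2) → Set X),
      (∀ i, (F i).Nonempty) ∧
      (∀ S : Finset (Fin (m ^ 2)),
        (∀ i ∈ S, ∀ j ∈ S, i ≠ j → (F i ∩ F j).Nonempty) → (⋂ i ∈ S, F i).Nonempty) ∧
      ((Finset.powersetCard 2 (Finset.univ : Finset (Fin (m ^ 2)))).filter
          (fun S : Finset (Fin (m ^ 2)) => (⋂ i ∈ S, F i).Nonempty)).card
        = (m ^ 2).choose 2 - m * m.choose 2 ∧
      (∀ S : Finset (Fin (m ^ 2)), (⋂ i ∈ S, F i).Nonempty → S.card ≤ m) := by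
  have : NeZero m := ⟨hm.ne'⟩
  let e : Fin (m ^ 2) ≃ Fin m × Fin m := (finCongr (sq m)).trans finProdFinEquiv.symm
  refine ⟨Fin m → Fin m, fun i => functionsThrough (e i),
    fun i => functionsThrough_nonempty (e i), fun S hS => ?_, ?_, fun S hS => ?_⟩
  · exact nonempty_biInter_functionsThrough_of_pairwise (S := (S : Set (Fin (m ^ 2))))
      fun i hi j hj => hS i hi j hj
  · simpa only [Fintype.card_fin] using card_filter_nonempty_biInter_functionsThrough e
  · simpa only [Fintype.card_fin] using
      card_le_of_nonempty_biInter_functionsThrough e.injective.injOn hS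
end
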